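/- For every basic instruction a and every k ∈ ℕ, the thread extracted from the PGA-program (a;#k;#0)^ω equals a^∞ (the unique thread P satisfying P = a∘P) if k mod 3 = 2, and equals a∘D otherwise. -/

import Mathlib

/-- Primitive instructions over a set `A` of basic instructions:
basic instructions `a`, positive tests `+a`, negative tests `-a`,
jump instructions `#k` and the termination instruction `!`. -/
inductive PrimInstr (A : Type) : Type where
  | basic (a : A)
  | pos (a : A)
  | neg (a : A)
  | jump (k : Nat)
  | halt
deriving DecidableEq

/-- PGA-programs over `A`: primitive instructions, concatenation `X;Y`
and repetition `X^ω`. -/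
inductive PGA (A : Type) : Type where
  | prim (u : PrimInstr A)
  | seq (X Y : PGA A)
  | rep (X : PGA A)
deriving DecidableEq

/-- A SPI: a nonempty finite (list) or infinite (function) sequence of primitive
instructions.  (Nonemptiness always holds for denotations of PGA-programs.) -/
abbrev SPI (A : Type) : Type := List (PrimInstr A) ⊕ (ℕ → PrimInstr A)

/-- Concatenation of SPIs; if the first one is infinite, it is the result. -/
def SPI.seqc {A : Type} : SPI A → SPI A → SPI A
  | .inl l, .inl l' => .inl (l ++ l')
  | .inl l, .inr s => .inr fun n => if h : n < l.length then l.get ⟨n, h⟩ else s (n - l.length)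
  | .inr s, _ => .inr s

/-- Infinite repetition of a SPI; an infinite SPI is its own repetition.
(The `getD`-default is never relevant: SPIs of PGA-programs are nonempty.) -/
def SPI.omega {A : Type} : SPI A → SPI A
  | .inl l => .inr fun n => l.getD (n % l.length) .halt
  | .inr s => .inr s

/-- The SPI denoted by a PGA-program. -/
def PGA.spi {A : Type} : PGA A → SPI A
  | .prim u => .inl [u]
  | .seq X Y => X.spi.seqc Y.spi
  | .rep X => X.spi.omega

/-- The instruction of a SPI at a (0-based) position, if any. -/
def SPI.at? {A : Type} : SPI A → ℕ → Option (PrimInstr A)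
  | .inl l, n => l[n]?
  | .inr s, n => some (s n)

/-- The polynomial functor `X ↦ {S} ⊕ {D} ⊕ A × X × X` whose final coalgebra
is the type of threads. -/
def ThreadF (A : Type) : PFunctor.{0} :=
  ⟨Unit ⊕ Unit ⊕ A, fun s => match s with
    | .inl _ => Empty
    | .inr (.inl _) => Empty
    | .inr (.inr _) => Bool⟩

/-- Threads over `A`: the final coalgebra (coinductive type) generated by
termination `S`, deadlock `D` and postconditional composition. -/
def ThreadT (A : Type) : Type := PFunctor.M (ThreadF A)

/-- The terminating thread `S`. -/
def ThreadT.S {A : Type} : ThreadT A := PFunctor.M.mk ⟨Sum.inl (), Empty.elim⟩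

/-- The deadlocking (inactive) thread `D`. -/
def ThreadT.D {A : Type} : ThreadT A := PFunctor.M.mk ⟨Sum.inr (Sum.inl ()), Empty.elim⟩

/-- Postconditional composition `P ⊴ a ⊵ Q` (continue as `P` on reply `true`
to `a`, as `Q` on reply `false`).  Action prefix `a ∘ P` is `P ⊴ a ⊵ P`. -/
def ThreadT.post {A : Type} (a : A) (P Q : ThreadT A) : ThreadT A :=
  PFunctor.M.mk ⟨Sum.inr (Sum.inr a), fun b => match b with | true => P | false => Q⟩

/-- The size of a proper jump instruction (`#m` with `m ≥ 1`), if any. -/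
def jumpSize {A : Type} : Option (PrimInstr A) → Option ℕ
  | some (.jump (m+1)) => some (m+1)
  | _ => none

/-- Following the chain of (proper) jumps of `σ` starting at position `j`. -/
def jchain {A : Type} (σ : ℕ → Option (PrimInstr A)) (j : ℕ) : ℕ → ℕ
  | 0 => j
  | k+1 =>
    match jumpSize (σ (jchain σ j k)) with
    | some m => jchain σ j k + m
    | none => jchain σ j k

open Classical in
/-- One step of thread extraction at position `j` of the instruction sequence `σ`:
first resolve the chain of jumps from `j` (an infinite chain of jumps yields
deadlock `D`, as does jumping outside of the sequence or reaching `#0`), then read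
off the instruction: `!` gives `S`, a basic instruction `a` gives action prefix
with both continuations at the next position, a positive (negative) test gives
postconditional composition continuing at the next position upon `true` (`false`)
and at the position thereafter upon `false` (`true`). -/
noncomputable def xstep {A : Type} (σ : ℕ → Option (PrimInstr A)) (j : ℕ) :
    (ThreadF A).Obj ℕ :=
  haveI : DecidablePred fun k => jumpSize (σ (jchain σ j k)) = none := fun _ => inferInstance
  if h : ∃ k, jumpSize (σ (jchain σ j k)) = none then
    let j' := jchain σ j (Nat.find h)
    match σ j' with
    | some .halt => ⟨Sum.inl (), Empty.elim⟩
    | some (.basic a) => ⟨Sum.inr (Sum.inr a), fun _ => j' + 1⟩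
    | some (.pos a) => ⟨Sum.inr (Sum.inr a), fun b => match b with | true => j' + 1 | false => j' + 2⟩
    | some (.neg a) => ⟨Sum.inr (Sum.inr a), fun b => match b with | true => j' + 2 | false => j' + 1⟩
    | _ => ⟨Sum.inr (Sum.inl ()), Empty.elim⟩
  else ⟨Sum.inr (Sum.inl ()), Empty.elim⟩

/-- Thread extraction from an instruction-lookup function, starting at
(0-based) position `j₀`. -/
noncomputable def extractFrom {A : Type} (σ : ℕ → Option (PrimInstr A)) (j₀ : ℕ) : ThreadT A :=
  PFunctor.M.corec (xstep σ) j₀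

/-- Thread extraction `|X|` on PGA-programs: extraction along the SPI denoted
by `X`, starting at its first instruction.  This realizes exactly the defining
equations of thread extraction (Table 2 of the paper). -/
noncomputable def PGA.thread {A : Type} (X : PGA A) : ThreadT A :=
  extractFrom X.spi.at? 0

/-!
Thread extraction depends only on the instructions from the current position onwards, so on a
`p`-periodic sequence it is `p`-periodic in the position. For `(a ; #k ; #0)^ω` the period is `3`,
and the jump at position `1` leads to position `1 + k`, which counts modulo `3`: back to `a` if
`k % 3 = 2`, so that the thread `Q` satisfies `Q = a ∘ Q`; to `#0` if `k % 3 = 1`; and forever from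
one copy of `#k` to another if `k % 3 = 0`.
-/

section Extraction

variable {A : Type} {σ : ℕ → Option (PrimInstr A)} {j k m n : ℕ}

theorem jumpSize_jump (hk : k ≠ 0) :
    jumpSize (some (.jump k) : Option (PrimInstr A)) = some k := by
  obtain ⟨k, rfl⟩ := Nat.exists_eq_succ_of_ne_zero hk
  rfl

theorem jchain_succ_of_jumpSize_eq_some (h : jumpSize (σ (jchain σ j n)) = some m) :
    jchain σ j (n + 1) = jchain σ j n + m := by
  rw [jchain, h]

theorem jchain_succ_of_jumpSize_eq_none (h : jumpSize (σ (jchain σ j n)) = none) :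
    jchain σ j (n + 1) = jchain σ j n := by
  rw [jchain, h]

theorem jchain_eq_of_le (h : jumpSize (σ (jchain σ j n)) = none) (hnm : n ≤ m) :
    jchain σ j m = jchain σ j n := by
  induction m, hnm using Nat.le_induction with
  | base => rfl
  | succ m _ ih => rw [jchain_succ_of_jumpSize_eq_none (ih ▸ h), ih]

theorem jchain_succ_eq_jchain_add (h : jumpSize (σ j) = some m) (n : ℕ) :
    jchain σ j (n + 1) = jchain σ (j + m) n := by
  induction n with
  | zero => exact jchain_succ_of_jumpSize_eq_some h
  | succ n ih => rw [jchain, ih, jchain]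

theorem jchain_add (σ : ℕ → Option (PrimInstr A)) (p j n : ℕ) :
    jchain σ (p + j) n = p + jchain (fun i => σ (p + i)) j n := by
  induction n with
  | zero => rfl
  | succ n ih =>
    rw [jchain, jchain, ih]
    cases jumpSize (σ (p + jchain (fun i => σ (p + i)) j n)) with
    | none => rfl
    | some m => exact Nat.add_assoc ..

/-- The deadlocking step of a thread coalgebra with states `X`, so that `ThreadT.D` is
`PFunctor.M.mk ThreadF.deadlock`. -/
def ThreadF.deadlock {X : Type} : (ThreadF A).Obj X :=
  ⟨Sum.inr (Sum.inl ()), Empty.elim⟩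

theorem ThreadF.map_deadlock {X Y : Type} (f : X → Y) :
    (ThreadF A).map f ThreadF.deadlock = ThreadF.deadlock :=
  Sigma.ext rfl (heq_of_eq (funext fun b => b.elim))

/-- The step of thread extraction for the instruction `u` found at position `j`, once all jumps
have been resolved. The only jump that can then remain is `#0`, so every jump is read as deadlock,
as is the absence of an instruction. -/
def readOff (u : Option (PrimInstr A)) (j : ℕ) : (ThreadF A).Obj ℕ :=
  match u with
  | some .halt => ⟨Sum.inl (), Empty.elim⟩
  | some (.basic a) => ⟨Sum.inr (Sum.inr a), fun _ => j + 1⟩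
  | some (.pos a) =>
    ⟨Sum.inr (Sum.inr a), fun b => match b with | true => j + 1 | false => j + 2⟩
  | some (.neg a) =>
    ⟨Sum.inr (Sum.inr a), fun b => match b with | true => j + 2 | false => j + 1⟩
  | _ => ThreadF.deadlock

theorem map_add_readOff (p : ℕ) (u : Option (PrimInstr A)) (j : ℕ) :
    (ThreadF A).map (p + ·) (readOff u j) = readOff u (p + j) := by
  rcases u with _ | (_ | _ | _ | _ | _) <;> refine Sigma.ext rfl (heq_of_eq (funext fun b => ?_))
  all_goals cases b <;> rfl

theorem xstep_eq_readOff (h : jumpSize (σ (jchain σ j n)) = none) :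
    xstep σ j = readOff (σ (jchain σ j n)) (jchain σ j n) := by
  classical
  have hex : ∃ n, jumpSize (σ (jchain σ j n)) = none := ⟨n, h⟩
  rw [jchain_eq_of_le (Nat.find_spec hex) (Nat.find_min' hex h)]
  exact dif_pos hex

theorem xstep_of_jumpSize_eq_none (h : jumpSize (σ j) = none) : xstep σ j = readOff (σ j) j :=
  xstep_eq_readOff (n := 0) h

theorem xstep_eq_deadlock (h : ∀ n, jumpSize (σ (jchain σ j n)) ≠ none) :
    xstep σ j = ThreadF.deadlock :=
  dif_neg (not_exists.2 h)

theorem xstep_jump (h : jumpSize (σ j) = some m) : xstep σ j = xstep σ (j + m) := by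
  by_cases hex : ∃ n, jumpSize (σ (jchain σ (j + m) n)) = none
  · obtain ⟨n, hn⟩ := hex
    rw [xstep_eq_readOff hn, ← jchain_succ_eq_jchain_add h n]
    exact xstep_eq_readOff (by rwa [jchain_succ_eq_jchain_add h])
  · rw [xstep_eq_deadlock (not_exists.1 hex), xstep_eq_deadlock]
    rintro (_ | n)
    · rw [jchain, h]
      exact Option.some_ne_none m
    · rw [jchain_succ_eq_jchain_add h]
      exact not_exists.1 hex n

theorem map_add_xstep (σ : ℕ → Option (PrimInstr A)) (p j : ℕ) :
    (ThreadF A).map (p + ·) (xstep (fun i => σ (p + i)) j) = xstep σ (p + j) := by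
  by_cases hex : ∃ n, jumpSize (σ (jchain σ (p + j) n)) = none
  · obtain ⟨n, hn⟩ := hex
    rw [xstep_eq_readOff hn, jchain_add, ← map_add_readOff]
    exact congrArg _ (xstep_eq_readOff (by rwa [jchain_add] at hn))
  · have hloop := not_exists.1 hex
    have hloop' (n : ℕ) : jumpSize (σ (p + jchain (fun i => σ (p + i)) j n)) ≠ none := by
      simpa only [jchain_add] using hloop n
    rw [xstep_eq_deadlock hloop, xstep_eq_deadlock hloop', ThreadF.map_deadlock]

theorem extractFrom_eq_mk (σ : ℕ → Option (PrimInstr A)) (j : ℕ) :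
    extractFrom σ j = PFunctor.M.mk ((ThreadF A).map (extractFrom σ) (xstep σ j)) :=
  PFunctor.M.corec_def _ _

theorem extractFrom_eq_D (h : xstep σ j = ThreadF.deadlock) : extractFrom σ j = ThreadT.D := by
  rw [extractFrom_eq_mk, h]
  exact congrArg PFunctor.M.mk (ThreadF.map_deadlock _)

theorem extractFrom_basic {a : A} (h : σ j = some (.basic a)) :
    extractFrom σ j = ThreadT.post a (extractFrom σ (j + 1)) (extractFrom σ (j + 1)) := by
  rw [extractFrom_eq_mk, xstep_of_jumpSize_eq_none (by rw [h]; rfl), h]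
  exact congrArg PFunctor.M.mk (Sigma.ext rfl (heq_of_eq (funext fun b => by cases b <;> rfl)))

theorem extractFrom_jump_zero (h : σ j = some (.jump 0)) : extractFrom σ j = ThreadT.D := by
  refine extractFrom_eq_D ?_
  rw [xstep_of_jumpSize_eq_none (by rw [h]; rfl), h]
  rfl

theorem extractFrom_jump (h : σ j = some (.jump k)) (hk : k ≠ 0) :
    extractFrom σ j = extractFrom σ (j + k) := by
  rw [extractFrom_eq_mk, xstep_jump (h ▸ jumpSize_jump hk), ← extractFrom_eq_mk]

theorem extractFrom_add (σ : ℕ → Option (PrimInstr A)) (p j : ℕ) :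
    extractFrom σ (p + j) = extractFrom (fun i => σ (p + i)) j := by
  refine congrFun (PFunctor.M.corec_unique _ (fun j => extractFrom σ (p + j)) fun j => ?_) j
  rw [extractFrom_eq_mk, PFunctor.M.dest_mk, ← map_add_xstep]
  rfl

theorem extractFrom_periodic {p : ℕ} (hσ : Function.Periodic σ p) :
    Function.Periodic (extractFrom σ) p := fun j => by
  rw [Nat.add_comm, extractFrom_add]
  exact congrArg (extractFrom · j) (funext fun i => Nat.add_comm p i ▸ hσ i)

theorem extractFrom_jump_period (hσ : Function.Periodic σ k) (h : σ j = some (.jump k)) :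
    extractFrom σ j = ThreadT.D := by
  rcases eq_or_ne k 0 with rfl | hk
  · exact extractFrom_jump_zero h
  have hchain : ∀ n, σ (jchain σ j n) = some (.jump k) := fun n => by
    induction n with
    | zero => exact h
    | succ n ih => rw [jchain_succ_of_jumpSize_eq_some (ih ▸ jumpSize_jump hk), hσ, ih]
  exact extractFrom_eq_D (xstep_eq_deadlock fun n => by simp [hchain n, jumpSize_jump hk])

theorem SPI.at?_omega_periodic (l : List (PrimInstr A)) :
    Function.Periodic (SPI.at? (SPI.omega (.inl l))) l.length := fun n => by
  simp only [SPI.omega, SPI.at?, Nat.add_mod_right]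

end Extraction

/-- The thread extracted from `(a ; #k ; #0)^ω` is `a^∞` (the unique thread `P`
with `P = a ∘ P`) if `k mod 3 = 2`, and `a ∘ D` otherwise. -/
theorem thread_of_padded_repeater (A : Type) (a : A) (k : ℕ) (P : ThreadT A)
    (hP : P = ThreadT.post a P P)
    (hPuniq : ∀ Q : ThreadT A, Q = ThreadT.post a Q Q → Q = P) :
    (PGA.rep ((PGA.prim (.basic a)).seq
        ((PGA.prim (.jump k)).seq (PGA.prim (.jump 0))))).thread =
      if k % 3 = 2 then P else ThreadT.post a ThreadT.D ThreadT.D := by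
  let σ := SPI.at? (SPI.omega (.inl [PrimInstr.basic a, .jump k, .jump 0]))
  have hσ : Function.Periodic σ 3 := SPI.at?_omega_periodic _
  have hjump : σ 1 = some (.jump k) := rfl
  have hjump_mod (r : ℕ) (hk : k ≠ 0) (hr : (1 + k) % 3 = r) :
      extractFrom σ 1 = extractFrom σ r := by
    rw [extractFrom_jump hjump hk, ← (extractFrom_periodic hσ).map_mod_nat, hr]
  have hstart : extractFrom σ 0 = ThreadT.post a (extractFrom σ 1) (extractFrom σ 1) :=
    extractFrom_basic rfl
  change extractFrom σ 0 = _
  split_ifs with hk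
  · refine hPuniq _ ?_
    rwa [hjump_mod 0 (by lia) (by lia)] at hstart
  · suffices hdead : extractFrom σ 1 = ThreadT.D by rw [hstart, hdead]
    by_cases hk0 : k % 3 = 0
    · obtain ⟨q, rfl⟩ := Nat.dvd_of_mod_eq_zero hk0
      exact extractFrom_jump_period (by simpa [mul_comm] using hσ.nat_mul q) hjump
    · rw [hjump_mod 2 (by lia) (by lia)]
      exact extractFrom_jump_zero rfl
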